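/- Let S be a finite inverse semigroup with zero. Then the map β : S → K(𝒢(S)) given by β(0) = ∅ and β(a) = {x ∈ 𝒢(S) : x ≤ a} for a ≠ 0 is a zero-preserving injective homomorphism which is universal among zero-preserving homomorphisms from S to Boolean inverse semigroups: for every zero-preserving homomorphism α : S → T with T a Boolean inverse semigroup, there is a unique morphism (additive homomorphism) γ : K(𝒢(S)) → T with γ ∘ β = α. In other words, the Booleanization of S is K(𝒢(S)). -/

import Mathlib

namespace Paper

/-- An inverse semigroup with zero: an associative multiplication, a zero that is
absorbing, and a map `⁻¹` sending each element to its unique generalized inverse. -/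
class IsInverseSemigroup (S : Type*) [Mul S] [Zero S] [Inv S] : Prop where
  mul_assoc : ∀ a b c : S, a * b * c = a * (b * c)
  mul_inv_mul : ∀ a : S, a * a⁻¹ * a = a
  inv_mul_inv : ∀ a : S, a⁻¹ * a * a⁻¹ = a⁻¹
  inv_unique : ∀ a b : S, a * b * a = a → b * a * b = b → b = a⁻¹
  zero_mul : ∀ a : S, 0 * a = 0
  mul_zero : ∀ a : S, a * 0 = 0

variable {S : Type*} [Mul S] [Zero S] [Inv S]

/-- The natural partial order: `a ≤ b` iff `a = b * a⁻¹ * a`. -/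
def nle (a b : S) : Prop := a = b * a⁻¹ * a

/-- `e` is an idempotent. -/
def idem (e : S) : Prop := e * e = e

/-- `a` and `b` are compatible. -/
def compat (a b : S) : Prop := idem (a⁻¹ * b) ∧ idem (a * b⁻¹)

/-- `a` and `b` are orthogonal. -/
def orth (a b : S) : Prop := a⁻¹ * b = 0 ∧ a * b⁻¹ = 0

/-- `j` is the least upper bound of `a` and `b` for the natural partial order. -/
def isJoin (a b j : S) : Prop :=
  nle a j ∧ nle b j ∧ ∀ c : S, nle a c → nle b c → nle j c

/-- `m` is the greatest lower bound of `a` and `b` for the natural partial order. -/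
def isMeet (a b m : S) : Prop :=
  nle m a ∧ nle m b ∧ ∀ c : S, nle c a → nle c b → nle c m

/-- `a` is an atom: a nonzero element with nothing strictly between it and `0`. -/
def isAtomElem (a : S) : Prop := a ≠ 0 ∧ ∀ x : S, nle x a → x = a ∨ x = 0

/-- `s` is the least upper bound of the finite family `f`. -/
def isJoinFin {m : ℕ} (f : Fin m → S) (s : S) : Prop :=
  (∀ i, nle (f i) s) ∧ ∀ c : S, (∀ i, nle (f i) c) → nle s c

/-- A Boolean inverse semigroup: a nonzero inverse semigroup with zero in which
compatible pairs have joins, multiplication distributes over binary compatible joins,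
and the idempotents form a generalized Boolean algebra under the natural partial
order (meets of idempotents are automatically given by multiplication; the extra
requirement is the existence of relative complements). -/
class IsBooleanInverseSemigroup (S : Type*) [Mul S] [Zero S] [Inv S]
    extends IsInverseSemigroup S : Prop where
  exists_ne_zero : ∃ a : S, a ≠ 0
  compat_join : ∀ a b : S, compat a b → ∃ j, isJoin a b j
  mul_join : ∀ a b j c : S, isJoin a b j → isJoin (c * a) (c * b) (c * j)
  join_mul : ∀ a b j c : S, isJoin a b j → isJoin (a * c) (b * c) (j * c)
  relcomp : ∀ e f : S, idem e → idem f → nle f e →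
    ∃ g : S, idem g ∧ nle g e ∧ g * f = 0 ∧ isJoin f g e


/-- `A` is a local bisection of the groupoid of atoms of `S` (under the restricted
product): a set of atoms in which elements with equal domains are equal and
elements with equal ranges are equal. -/
def lbAtoms {S : Type*} [Mul S] [Zero S] [Inv S] (A : Set S) : Prop :=
  (∀ x ∈ A, isAtomElem x) ∧
    ∀ x ∈ A, ∀ y ∈ A, (x⁻¹ * x = y⁻¹ * y → x = y) ∧ (x * x⁻¹ = y * y⁻¹ → x = y)

/-- The setwise product of subsets of `S` with respect to the restricted product:
`x · y` is included when `d(x) = r(y)`. -/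
def restrictedSetMul {S : Type*} [Mul S] [Inv S] (A B : Set S) : Set S :=
  {z | ∃ x ∈ A, ∃ y ∈ B, x⁻¹ * x = y * y⁻¹ ∧ z = x * y}

/-- The map sending an element to the set of atoms below it. -/
def theta {S : Type*} [Mul S] [Zero S] [Inv S] (a : S) : Set S :=
  {x | isAtomElem x ∧ nle x a}

/-- `A` is a local bisection of the restricted groupoid `𝒢(S)` of `S` (the nonzero
elements of `S` under the restricted product). -/
def KGlb {S : Type*} [Mul S] [Zero S] [Inv S] (A : Set S) : Prop :=
  (∀ x ∈ A, x ≠ 0) ∧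
    ∀ x ∈ A, ∀ y ∈ A, (x⁻¹ * x = y⁻¹ * y → x = y) ∧ (x * x⁻¹ = y * y⁻¹ → x = y)

/-- The canonical map `β : S → K(𝒢(S))`, sending `a` to the set of nonzero
elements below `a` (so `β(0) = ∅`). -/
def betaMap {S : Type*} [Mul S] [Zero S] [Inv S] (a : S) : Set S :=
  {x | x ≠ 0 ∧ nle x a}

/-- `γ` is a morphism `K(𝒢(S)) → T` of Boolean inverse semigroups: it sends the
zero `∅` to `0`, products of local bisections (the setwise restricted product) to
products, and binary compatible joins (unions of local bisections whose union is a
local bisection) to joins. -/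
def isKGMorphism {S : Type*} {T : Type*} [Mul S] [Zero S] [Inv S]
    [Mul T] [Zero T] [Inv T] (γ : Set S → T) : Prop :=
  γ (∅ : Set S) = 0 ∧
  (∀ A B : Set S, KGlb A → KGlb B → γ (restrictedSetMul A B) = γ A * γ B) ∧
  (∀ A B : Set S, KGlb A → KGlb B → KGlb (A ∪ B) →
    isJoin (γ A) (γ B) (γ (A ∪ B)))

universe u v

section Basics
open IsInverseSemigroup

variable {S : Type*} [Mul S] [Zero S] [Inv S] [IsInverseSemigroup S]

theorem ma (a b c : S) : a * b * c = a * (b * c) := mul_assoc a b c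
theorem aia (a : S) : a * (a⁻¹ * a) = a := by rw [← ma, mul_inv_mul]
theorem aiac (a c : S) : a * (a⁻¹ * (a * c)) = a * c := by rw [← ma, ← ma, mul_inv_mul]
theorem iai (a : S) : a⁻¹ * (a * a⁻¹) = a⁻¹ := by rw [← ma, inv_mul_inv]
theorem iaic (a c : S) : a⁻¹ * (a * (a⁻¹ * c)) = a⁻¹ * c := by rw [← ma, ← ma, inv_mul_inv]
theorem ii (a : S) : a⁻¹⁻¹ = a := (IsInverseSemigroup.inv_unique _ _ (inv_mul_inv a) (mul_inv_mul a)).symm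
theorem zm (a : S) : 0 * a = 0 := zero_mul a
theorem mz (a : S) : a * 0 = 0 := mul_zero a

theorem idem_c {e : S} (h : idem e) (c : S) : e * (e * c) = e * c := by
  rw [← ma, h]

theorem idem_inv {e : S} (h : idem e) : e⁻¹ = e := by
  symm; apply IsInverseSemigroup.inv_unique <;> rw [h, h]

theorem idem_mul {e f : S} (he : idem e) (hf : idem f) : idem (e * f) := by
  have h : f * (e * f)⁻¹ * e = (e * f)⁻¹ := by
    apply IsInverseSemigroup.inv_unique
    · have := aia (e * f)
      simp only [ma, idem_c he, idem_c hf] at this ⊢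
      exact this
    · have := iaic (e * f) e
      simp only [ma, idem_c he, idem_c hf] at this ⊢
      rw [this]
  have h2 : idem (e * f)⁻¹ := by
    unfold idem
    have := iaic (e * f) e
    conv_lhs => rw [← h]
    conv_rhs => rw [← h]
    simp only [ma] at this ⊢
    rw [this]
  have := idem_inv h2
  rw [ii] at this
  rw [this]; exact h2

theorem idem_comm {e f : S} (he : idem e) (hf : idem f) : e * f = f * e := by
  have h1 := idem_mul he hf
  have h2 := idem_mul hf he
  rw [← idem_inv h1]; symm
  apply IsInverseSemigroup.inv_unique
  · simp only [idem, ma] at h1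
    simp only [ma, idem_c he, idem_c hf, h1]
  · simp only [idem, ma] at h2
    simp only [ma, idem_c he, idem_c hf, h2]

theorem idem_d (a : S) : idem (a⁻¹ * a) := by simp only [idem, ma, aia]
theorem idem_r (a : S) : idem (a * a⁻¹) := by simp only [idem, ma, iai]
theorem idem_zero : idem (0 : S) := zm 0

theorem mul_inv (a b : S) : (a * b)⁻¹ = b⁻¹ * a⁻¹ := by
  symm
  have h := idem_comm (idem_r b) (idem_d a)
  simp only [ma] at h
  apply IsInverseSemigroup.inv_unique
  · calc a * b * (b⁻¹ * a⁻¹) * (a * b) = a * (b * (b⁻¹ * (a⁻¹ * a))) * b := by simp only [ma]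
      _ = _ := by rw [h]; simp only [ma, aiac, aia]
  · calc b⁻¹ * a⁻¹ * (a * b) * (b⁻¹ * a⁻¹) = b⁻¹ * (a⁻¹ * (a * (b * b⁻¹))) * a⁻¹ := by simp only [ma]
      _ = _ := by rw [← h]; simp only [ma, iaic, iai]

theorem inv_zero' : (0 : S)⁻¹ = 0 := idem_inv idem_zero

theorem idem_conj {e : S} (a : S) (he : idem e) : idem (a * e * a⁻¹) := by
  have h := idem_comm he (idem_d a)
  simp only [ma] at h
  unfold idem
  calc a * e * a⁻¹ * (a * e * a⁻¹) = a * (e * (a⁻¹ * a)) * e * a⁻¹ := by simp only [ma]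
    _ = _ := by rw [h]; simp only [ma, idem_c he, aiac]

/-- moving an idempotent across -/
theorem mul_idem {e : S} (a : S) (he : idem e) : a * e = (a * e * a⁻¹) * a := by
  have h := idem_comm he (idem_d a)
  calc a * e = a * ((a⁻¹ * a) * e) := by simp only [ma, aiac]
    _ = _ := by rw [← h]; simp only [ma]

theorem idem_conj' {e : S} (a : S) (he : idem e) : idem (a⁻¹ * e * a) := by
  have := idem_conj a⁻¹ he; rwa [ii] at this

theorem idem_mul_el {e : S} (a : S) (he : idem e) : e * a = a * (a⁻¹ * e * a) := by
  have h := idem_comm he (idem_r a)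
  calc e * a = (e * (a * a⁻¹)) * a := by simp only [ma, aia]
    _ = _ := by rw [h]; simp only [ma]

theorem nle_of_r {a b e : S} (he : idem e) (h : a = b * e) : nle a b := by
  subst h
  have h := idem_comm he (idem_d b)
  simp only [ma] at h
  unfold nle
  rw [mul_inv, idem_inv he]
  calc b * e = b * (b⁻¹ * (b * e)) := by rw [aiac]
    _ = b * (e * (b⁻¹ * b)) * e := by rw [h]; simp only [ma]; rw [he]
    _ = _ := by rw [h]; simp only [ma, aiac]; rw [he, ← h]; simp only [idem_c he]; simp only [h, aiac]

theorem nle_of_l {a b e : S} (he : idem e) (h : a = e * b) : nle a b := by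
  rw [idem_mul_el b he] at h
  exact nle_of_r (idem_conj' b he) h

theorem nle_r {a b : S} (h : nle a b) : a = b * (a⁻¹ * a) := by rw [← ma]; exact h
theorem nle_l {a b : S} (h : nle a b) : a = (a * a⁻¹) * b := by
  have h1 := nle_r h
  have h2 := mul_idem b (idem_d a)
  rw [← h1] at h2
  have h3 : idem (a * b⁻¹) := by
    have := idem_conj b (idem_d a)
    rwa [← h1] at this
  have h4 := idem_comm (idem_r a) h3
  calc a = a * b⁻¹ * b := h2
    _ = (a * a⁻¹) * (a * b⁻¹) * b := by simp only [ma, aiac]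
    _ = (a * b⁻¹) * (a * a⁻¹) * b := by rw [h4]
    _ = _ := by
      have : a * b⁻¹ * (a * a⁻¹) = a * a⁻¹ := by
        have h5 := idem_inv h3
        rw [mul_inv, ii] at h5
        calc a * b⁻¹ * (a * a⁻¹) = (b * a⁻¹) * (a * a⁻¹) := by rw [h5]
          _ = b * (a⁻¹ * a) * a⁻¹ := by simp only [ma]
          _ = _ := by rw [← h1]
      rw [this]

theorem nle_refl (a : S) : nle a a := nle_of_r (idem_d a) (aia a).symm
theorem nle_zero (a : S) : nle 0 a := nle_of_r idem_zero (mz a).symm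
theorem nle_trans {a b c : S} (h1 : nle a b) (h2 : nle b c) : nle a c := by
  refine nle_of_r (idem_mul (idem_d b) (idem_d a)) ?_
  rw [← ma, ← nle_r h2, ← nle_r h1]
theorem nle_antisymm {a b : S} (h1 : nle a b) (h2 : nle b a) : a = b := by
  have e1 := nle_r h1
  have e2 := nle_r h2
  calc a = b * (a⁻¹ * a) := e1
    _ = a * (b⁻¹ * b) * (a⁻¹ * a) := by rw [← e2]
    _ = a * ((b⁻¹ * b) * (a⁻¹ * a)) := by rw [ma]
    _ = a * ((a⁻¹ * a) * (b⁻¹ * b)) := by rw [idem_comm (idem_d a) (idem_d b)]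
    _ = a * (b⁻¹ * b) := by simp only [ma, aiac]
    _ = b := e2.symm
theorem nle_mul_left {a b : S} (c : S) (h : nle a b) : nle (c * a) (c * b) :=
  nle_of_r (idem_d a) (by rw [ma, ← nle_r h])
theorem nle_mul_right {a b : S} (c : S) (h : nle a b) : nle (a * c) (b * c) :=
  nle_of_l (idem_r a) (by rw [← ma, ← nle_l h])
theorem nle_idem {a e : S} (he : idem e) (h : nle a e) : idem a := by
  rw [nle_r h]; exact idem_mul he (idem_d a)
theorem idem_nle_iff {e f : S} (he : idem e) : nle e f → f * e = e := by
  intro h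
  have := nle_r h
  rw [idem_inv he, he] at this
  exact this.symm
theorem idem_nle_l {e f : S} (he : idem e) : nle e f → e * f = e := by
  intro h
  have := nle_l h
  rw [idem_inv he, he] at this
  exact this.symm
theorem nle_zero_eq {a : S} (h : nle a 0) : a = 0 := nle_antisymm h (nle_zero a)
theorem d_nle {a b : S} (h : nle a b) : nle (a⁻¹ * a) (b⁻¹ * b) := by
  refine nle_of_r (idem_d a) ?_
  have h1 := nle_r h
  have h2 : a⁻¹ = (a⁻¹ * a) * b⁻¹ := by
    conv_lhs => rw [h1, mul_inv, idem_inv (idem_d a)]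
  calc a⁻¹ * a = (a⁻¹ * a) * b⁻¹ * (b * (a⁻¹ * a)) := by rw [← h1, ← h2]
    _ = (a⁻¹ * a) * (b⁻¹ * b) * (a⁻¹ * a) := by simp only [ma]
    _ = _ := by rw [idem_comm (idem_d a) (idem_d b), ma, idem_d]

theorem d_res {a e : S} (he : idem e) (h : nle e (a⁻¹ * a)) : (a * e)⁻¹ * (a * e) = e := by
  rw [mul_inv, idem_inv he]
  calc e * a⁻¹ * (a * e) = e * ((a⁻¹ * a) * e) := by simp only [ma]
    _ = e := by rw [idem_nle_iff he h, he]

theorem beta_lb (a : S) : KGlb (betaMap a) := by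
  refine ⟨fun x hx => hx.1, fun x hx y hy => ⟨fun h => ?_, fun h => ?_⟩⟩
  · rw [nle_r hx.2, nle_r hy.2, h]
  · rw [nle_l hx.2, nle_l hy.2, h]

theorem beta_zero : betaMap (0 : S) = ∅ := by
  ext x
  simp only [betaMap, Set.mem_ofPred_eq, Set.mem_empty_iff_false, iff_false]
  exact fun h => h.1 (nle_zero_eq h.2)

theorem rprod_ne {x y : S} (hy : y ≠ 0) (h : x⁻¹ * x = y * y⁻¹) : x * y ≠ 0 := by
  intro h0
  apply hy
  rw [← aia y, ← ma, ← h, ma, h0, mz]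

theorem beta_mul (a b : S) : betaMap (a * b) = restrictedSetMul (betaMap a) (betaMap b) := by
  ext x
  constructor
  · rintro ⟨hx, hle⟩
    have h1 := nle_r hle
    have h2 := d_nle hle
    have he := idem_d x
    generalize x⁻¹ * x = e at *
    have hE := idem_nle_iff he h2
    have hd : (a * (b * e * b⁻¹))⁻¹ * (a * (b * e * b⁻¹)) = b * e * b⁻¹ := by
      rw [mul_inv, idem_inv (idem_conj b he)]
      rw [mul_inv] at hE
      calc _ = b * (e * ((b⁻¹ * a⁻¹ * (a * b)) * e)) * b⁻¹ := by simp only [ma]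
        _ = _ := by rw [hE, he]
    have hr : (b * e) * (b * e)⁻¹ = b * e * b⁻¹ := by
      rw [mul_inv, idem_inv he]; simp only [ma, idem_c he]
    have hp : x = a * (b * e * b⁻¹) * (b * e) := by
      rw [ma, ← hr, ma (b*e), aia, ← ma]; exact h1
    refine ⟨a * (b * e * b⁻¹), ⟨?_, nle_of_r (idem_conj b he) rfl⟩, b * e,
      ⟨?_, nle_of_r he rfl⟩, by rw [hd, hr], hp⟩
    · intro h; rw [h, zm] at hp; exact hx hp
    · intro h; rw [h, mz] at hp; exact hx hp
  · rintro ⟨x, hx, y, hy, h, rfl⟩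
    exact ⟨rprod_ne hy.1 h, nle_trans (nle_mul_left x hy.2) (nle_mul_right b hx.2)⟩

theorem beta_inj (a b : S) (h : betaMap a = betaMap b) : a = b := by
  have key : ∀ a b : S, betaMap a = betaMap b → nle a b := by
    intro a b h
    by_cases h0 : a = 0
    · rw [h0]; exact nle_zero b
    · have : a ∈ betaMap a := ⟨h0, nle_refl a⟩
      rw [h] at this; exact this.2
  exact nle_antisymm (key a b h) (key b a h.symm)

end Basics

section Bool

variable {T : Type*} [Mul T] [Zero T] [Inv T] [IsBooleanInverseSemigroup T]

/-- least upper bound of a set -/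
def lubS {T : Type*} [Mul T] [Zero T] [Inv T] (X : Set T) (j : T) : Prop :=
  (∀ x ∈ X, nle x j) ∧ ∀ c : T, (∀ x ∈ X, nle x c) → nle j c

theorem lubS_unique {X : Set T} {j k : T} (h : lubS X j) (h' : lubS X k) : j = k :=
  nle_antisymm (h.2 _ h'.1) (h'.2 _ h.1)

theorem lub_exists (X : Set T) (hX : X.Finite) :
    (∀ x ∈ X, ∀ y ∈ X, x ≠ y → orth x y) →
    ∃ j, lubS X j ∧ (∀ c, lubS ((fun x => c * x) '' X) (c * j)) ∧
      (∀ c, lubS ((fun x => x * c) '' X) (j * c)) := by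
  induction X, hX using Set.Finite.induction_on with
  | empty =>
    intro _
    refine ⟨0, ⟨by simp, fun c _ => nle_zero c⟩, fun c => ⟨by simp, fun d _ => ?_⟩,
      fun c => ⟨by simp, fun d _ => ?_⟩⟩
    · rw [mz]; exact nle_zero d
    · rw [zm]; exact nle_zero d
  | @insert a X ha _ ih =>
    intro ho
    obtain ⟨j, h1, h2, h3⟩ := ih (fun x hx y hy => ho x (Or.inr hx) y (Or.inr hy))
    have hao : ∀ x ∈ X, orth a x := fun x hx => ho a (Or.inl rfl) x (Or.inr hx)
      (fun h => ha (h ▸ hx))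
    have z1 : a⁻¹ * j = 0 := by
      apply nle_zero_eq
      apply (h2 a⁻¹).2
      rintro _ ⟨x, hx, rfl⟩
      simp only [(hao x hx).1]; exact nle_refl 0
    have z2 : j * a⁻¹ = 0 := by
      apply nle_zero_eq
      apply (h3 a⁻¹).2
      rintro _ ⟨x, hx, rfl⟩
      have := congrArg (·⁻¹) (hao x hx).2
      simp only [mul_inv, ii, inv_zero'] at this
      simp only [this]; exact nle_refl 0
    have z3 : a * j⁻¹ = 0 := by
      have := congrArg (·⁻¹) z2
      simpa only [mul_inv, ii, inv_zero'] using this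
    obtain ⟨k, hk⟩ := IsBooleanInverseSemigroup.compat_join a j
      ⟨by rw [z1]; exact idem_zero, by rw [z3]; exact idem_zero⟩
    have gen : ∀ (f : T → T) , lubS (f '' X) (f j) → isJoin (f a) (f j) (f k) →
        lubS (f '' (insert a X)) (f k) := by
      intro f hl hj
      refine ⟨?_, ?_⟩
      · rintro _ ⟨x, rfl | hx, rfl⟩
        · exact hj.1
        · exact nle_trans (hl.1 _ ⟨x, hx, rfl⟩) hj.2.1
      · intro c hc
        exact hj.2.2 c (hc _ ⟨a, Or.inl rfl, rfl⟩)
          (hl.2 _ (by rintro _ ⟨x, hx, rfl⟩; exact hc _ ⟨x, Or.inr hx, rfl⟩))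
    refine ⟨k, ?_, fun c => gen _ (h2 c) (IsBooleanInverseSemigroup.mul_join _ _ _ _ hk),
      fun c => gen _ (h3 c) (IsBooleanInverseSemigroup.join_mul _ _ _ _ hk)⟩
    have := gen id (by simpa using h1) hk
    simpa using this

theorem lub_dist {X : Set T} (hX : X.Finite) (ho : ∀ x ∈ X, ∀ y ∈ X, x ≠ y → orth x y)
    {j : T} (hj : lubS X j) : (∀ c, lubS ((fun x => c * x) '' X) (c * j)) ∧
      (∀ c, lubS ((fun x => x * c) '' X) (j * c)) := by
  obtain ⟨k, h1, h2⟩ := lub_exists X hX ho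
  rw [lubS_unique hj h1]; exact h2

theorem compl_exists (u : T) (hu : idem u) (F : Set T) (hF : F.Finite) :
    (∀ f ∈ F, idem f) →
    ∃ g, idem g ∧ nle g u ∧ (∀ f ∈ F, g * f = 0) ∧
      (∀ h, idem h → nle h u → (∀ f ∈ F, h * f = 0) → nle h g) ∧
      ∀ c, nle g c → (∀ f ∈ F, nle (u * f) c) → nle u c := by
  induction F, hF using Set.Finite.induction_on with
  | empty =>
    intro _
    exact ⟨u, hu, nle_refl u, by simp, fun h _ h2 _ => h2, fun c h _ => h⟩
  | @insert a X ha _ ih =>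
    intro hi
    obtain ⟨g, hg, hgu, h1, h2, h3⟩ := ih (fun f hf => hi f (Or.inr hf))
    have ia := hi a (Or.inl rfl)
    obtain ⟨k, ik, hkg, hz, hj⟩ := IsBooleanInverseSemigroup.relcomp g (g * a) hg
      (idem_mul hg ia) (nle_of_r ia rfl)
    have kg : k * g = k := idem_nle_l ik hkg
    refine ⟨k, ik, nle_trans hkg hgu, ?_, ?_, ?_⟩
    · rintro f (rfl | hf)
      · rw [← kg, ma]; exact hz
      · rw [← kg, ma, h1 f hf, mz]
    · intro h ih' hhu hh
      have hhg := h2 h ih' hhu (fun f hf => hh f (Or.inr hf))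
      have hg' : h * g = h := idem_nle_l ih' hhg
      have := IsBooleanInverseSemigroup.mul_join _ _ _ h hj
      rw [← ma, hg', hh a (Or.inl rfl)] at this
      exact nle_trans (this.2.2 (h * k) (nle_zero _) (nle_refl _)) (nle_of_l ih' rfl)
    · intro c hc hf
      refine h3 c (hj.2.2 c ?_ hc) (fun f hf' => hf f (Or.inr hf'))
      exact nle_trans (nle_mul_right a hgu) (hf a (Or.inl rfl))

end Bool

section Hom

variable {S : Type*} [Mul S] [Zero S] [Inv S] [IsInverseSemigroup S]
variable {T : Type*} [Mul T] [Zero T] [Inv T] [IsBooleanInverseSemigroup T]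

/-- the defining property of the part of `α e` disjoint from everything strictly below -/
def isPhi (α : S → T) (e : S) (g : T) : Prop :=
  idem g ∧ nle g (α e) ∧ (∀ f, idem f → nle f e → f ≠ e → g * α f = 0) ∧
    (∀ h, idem h → nle h (α e) → (∀ f, idem f → nle f e → f ≠ e → h * α f = 0) → nle h g) ∧
    ∀ c, nle g c → (∀ f, idem f → nle f e → f ≠ e → nle (α f) c) → nle (α e) c

variable {α : S → T} (hm : ∀ a b : S, α (a * b) = α a * α b)
include hm

theorem map_idem {e : S} (he : idem e) : idem (α e) := by
  unfold idem; rw [← hm, he]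

theorem map_inv' (a : S) : α a⁻¹ = (α a)⁻¹ := by
  apply IsInverseSemigroup.inv_unique
  · rw [← hm, ← hm, ma, aia]
  · rw [← hm, ← hm, ma, iai]

theorem map_nle {a b : S} (h : nle a b) : nle (α a) (α b) := by
  refine nle_of_r (map_idem hm (idem_d a)) ?_
  rw [← hm, ← nle_r h]

theorem phi_exists [Finite S] {e : S} (he : idem e) : ∃ g, isPhi α e g := by
  obtain ⟨g, h1, h2, h3, h4, h5⟩ := compl_exists (α e) (map_idem hm he)
    (α '' {f | idem f ∧ nle f e ∧ f ≠ e}) (Set.toFinite _)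
    (by rintro _ ⟨f, hf, rfl⟩; exact map_idem hm hf.1)
  refine ⟨g, h1, h2, fun f a b c => h3 _ ⟨f, ⟨a, b, c⟩, rfl⟩, ?_, ?_⟩
  · intro h a b c
    exact h4 h a b (by rintro _ ⟨f, hf, rfl⟩; exact c f hf.1 hf.2.1 hf.2.2)
  · intro c a b
    refine h5 c a ?_
    rintro _ ⟨f, hf, rfl⟩
    rw [← hm, idem_nle_iff hf.1 hf.2.1]
    exact b f hf.1 hf.2.1 hf.2.2

variable {p : S → T} (hp : ∀ e, idem e → isPhi α e (p e))
include hp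

theorem p_orth {e f : S} (he : idem e) (hf : idem f) (hne : e ≠ f) : p e * p f = 0 := by
  have key : ∀ e f : S, idem e → idem f → ¬ nle e f → p e * p f = 0 := by
    intro e f he hf h
    have h1 := hp e he
    have h2 := hp f hf
    have a1 : p e * α e = p e := idem_nle_l h1.1 h1.2.1
    have a2 : α f * p f = p f := idem_nle_iff h2.1 h2.2.1
    have a3 : p e * α (e * f) = 0 := by
      apply h1.2.2.1 _ (idem_mul he hf) (nle_of_r hf rfl)
      intro h'
      apply h
      rw [idem_comm he hf] at h'
      exact nle_of_r he h'.symm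
    rw [← a1, ← a2]
    calc p e * α e * (α f * p f) = p e * (α e * α f) * p f := by simp only [ma]
      _ = 0 := by rw [← hm, a3, zm]
  by_cases h : nle e f
  · rw [idem_comm (hp e he).1 (hp f hf).1]
    exact key f e hf he (fun h' => hne (nle_antisymm h h'))
  · exact key e f he hf h

theorem p_conj_le (a : S) : nle (α a * p (a⁻¹ * a) * (α a)⁻¹) (p (a * a⁻¹)) := by
  have h1 := hp _ (idem_d a)
  have h2 := hp _ (idem_r a)
  apply h2.2.2.2.1 _ (idem_conj _ h1.1)
  · refine nle_of_l (idem_conj (α a) h1.1) ?_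
    rw [hm, map_inv' hm]
    simp only [ma, iai]
  · intro f hf hfa hne
    have hfa' := idem_nle_iff hf hfa
    have hz : p (a⁻¹ * a) * α (a⁻¹ * f * a) = 0 := by
      apply h1.2.2.1 _ (idem_conj' a hf)
      · apply nle_of_r (idem_conj' a hf)
        simp only [ma, iaic]
      · intro h
        apply hne
        have : a * (a⁻¹ * f * a) * a⁻¹ = a * (a⁻¹ * a) * a⁻¹ := by rw [h]
        rw [aia] at this
        rw [← this]
        rw [idem_comm (idem_r a) hf] at hfa'
        calc f = (a * a⁻¹) * f * (a * a⁻¹) := by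
              rw [ma, hfa', idem_nle_iff hf hfa]
          _ = _ := by simp only [ma]
    have e1 : (α a)⁻¹ * α f = α (a⁻¹ * f * a) * (α a)⁻¹ := by
      rw [← map_inv' hm, ← hm, ← hm]
      congr 1
      rw [idem_comm (idem_r a) hf] at hfa'
      rw [ma, ma, hfa']
    rw [ma, e1, ma, ← ma (p _), hz, zm, mz]

theorem p_conj (a : S) : α a * p (a⁻¹ * a) = p (a * a⁻¹) * α a := by
  have h1 := hp _ (idem_d a)
  have h2 := hp _ (idem_r a)
  apply nle_antisymm
  · have := nle_mul_right (α a) (p_conj_le hm hp a)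
    rwa [← mul_idem _ h1.1] at this
  · have := nle_mul_left (α a) (p_conj_le hm hp a⁻¹)
    rw [ii, map_inv' hm, ii] at this
    rwa [← idem_mul_el _ h2.1] at this

theorem p_zero (h0 : α 0 = 0) : p 0 = 0 := by
  have := (hp 0 idem_zero).2.1
  rw [h0] at this; exact nle_zero_eq this

theorem p_lub [Finite S] (h0 : α 0 = 0) (e : S) (he : idem e) :
    lubS (p '' {f | idem f ∧ f ≠ 0 ∧ nle f e}) (α e) := by
  refine ⟨?_, ?_⟩
  · rintro _ ⟨f, hf, rfl⟩
    exact nle_trans (hp f hf.1).2.1 (map_nle hm hf.2.2)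
  · intro c hc
    have hc' : ∀ f, idem f → nle f e → nle (p f) c := by
      intro f hf hfe
      by_cases hz : f = 0
      · rw [hz, p_zero hm hp h0]; exact nle_zero c
      · exact hc _ ⟨f, ⟨hf, hz, hfe⟩, rfl⟩
    clear hc
    have wf : WellFounded (fun a b : S => nle a b ∧ a ≠ b) := by
      have : IsTrans S (fun a b : S => nle a b ∧ a ≠ b) := ⟨fun a b d h1 h2 =>
        ⟨nle_trans h1.1 h2.1, fun h => h1.2 (nle_antisymm h1.1 (h ▸ h2.1))⟩⟩
      have : Std.Irrefl (fun a b : S => nle a b ∧ a ≠ b) := ⟨fun a h => h.2 rfl⟩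
      exact Finite.wellFounded_of_trans_of_irrefl _
    induction e using wf.induction with
    | _ e ih =>
      refine (hp e he).2.2.2.2 c (hc' e he (nle_refl e)) ?_
      intro f hf hfe hne
      exact ih f ⟨hfe, hne⟩ hf (fun k hk hkf => hc' k hk (nle_trans hkf hfe))


theorem phi_orth {x y : S} (hd : x⁻¹ * x ≠ y⁻¹ * y) (hr : x * x⁻¹ ≠ y * y⁻¹) :
    orth (α x * p (x⁻¹ * x)) (α y * p (y⁻¹ * y)) := by
  constructor
  · rw [p_conj hm hp, p_conj hm hp, mul_inv, idem_inv (hp _ (idem_r x)).1, ma,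
      ← ma (p _), p_orth hm hp (idem_r x) (idem_r y) hr, zm, mz]
  · rw [mul_inv, idem_inv (hp _ (idem_d y)).1, ma,
      ← ma (p _), p_orth hm hp (idem_d x) (idem_d y) hd, zm, mz]

theorem phi_mul_ne {x y : S} (h : x⁻¹ * x ≠ y * y⁻¹) :
    (α x * p (x⁻¹ * x)) * (α y * p (y⁻¹ * y)) = 0 := by
  rw [p_conj hm hp y, ma, ← ma (p _), p_orth hm hp (idem_d x) (idem_r y) h, zm, mz]

theorem phi_mul_eq {x y : S} (h : x⁻¹ * x = y * y⁻¹) :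
    (α x * p (x⁻¹ * x)) * (α y * p (y⁻¹ * y)) = α (x * y) * p ((x * y)⁻¹ * (x * y)) := by
  have : (x * y)⁻¹ * (x * y) = y⁻¹ * y := by
    rw [mul_inv, ma, ← ma x⁻¹, h]; simp only [ma, aia, iaic]
  rw [this, p_conj hm hp y, h, ma, ← ma (p _), (hp _ (idem_r y)).1, ← p_conj hm hp y, hm, ma]

theorem phi_lub [Finite S] (h0 : α 0 = 0) (a : S) :
    lubS ((fun x => α x * p (x⁻¹ * x)) '' betaMap a) (α a) := by
  have h := p_lub hm hp h0 _ (idem_d a)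
  have ho : ∀ x ∈ p '' {f | idem f ∧ f ≠ 0 ∧ nle f (a⁻¹ * a)},
      ∀ y ∈ p '' {f | idem f ∧ f ≠ 0 ∧ nle f (a⁻¹ * a)}, x ≠ y → orth x y := by
    rintro _ ⟨e, he, rfl⟩ _ ⟨f, hf, rfl⟩ hne
    have := p_orth hm hp he.1 hf.1 (fun h => hne (by rw [h]))
    refine ⟨?_, ?_⟩
    · rw [idem_inv (hp e he.1).1]; exact this
    · rw [idem_inv (hp f hf.1).1]; exact this
  have h2 := (lub_dist (Set.toFinite _) ho h).1 (α a)
  rw [← hm, aia] at h2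
  convert h2 using 1
  have hk : ∀ e, idem e → α (a * e) * p e = α a * p e := by
    intro e he
    rw [hm, ma, idem_nle_iff (hp e he).1 (hp e he).2.1]
  ext t
  constructor
  · rintro ⟨x, hx, rfl⟩
    refine ⟨_, ⟨x⁻¹ * x, ⟨idem_d x, ?_, d_nle hx.2⟩, rfl⟩, ?_⟩
    · intro h; apply hx.1; rw [← aia x, h, mz]
    · have := hk _ (idem_d x)
      rw [← nle_r hx.2] at this
      exact this.symm
  · rintro ⟨_, ⟨e, ⟨he, hne, hle⟩, rfl⟩, rfl⟩
    have hd := d_res he hle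
    refine ⟨a * e, ⟨?_, nle_of_r he rfl⟩, ?_⟩
    · intro h; rw [h, mz] at hd; exact hne hd.symm
    · simp only [hd]; exact hk e he

end Hom

section Uniq

variable {S : Type*} [Mul S] [Zero S] [Inv S] [IsInverseSemigroup S]
variable {T : Type*} [Mul T] [Zero T] [Inv T] [IsBooleanInverseSemigroup T]

theorem lb_subset {A B : Set S} (h : KGlb B) (hs : A ⊆ B) : KGlb A :=
  ⟨fun x hx => h.1 x (hs hx), fun x hx y hy => h.2 x (hs hx) y (hs hy)⟩

theorem lb_single {x : S} (h : x ≠ 0) : KGlb ({x} : Set S) := by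
  refine ⟨?_, ?_⟩
  · rintro y rfl; exact h
  · rintro y rfl z rfl; exact ⟨fun _ => rfl, fun _ => rfl⟩

theorem morph_lub [Finite S] {γ : Set S → T} (hγ : isKGMorphism γ) (A : Set S) :
    KGlb A → lubS ((fun x => γ {x}) '' A) (γ A) := by
  have hA : A.Finite := Set.toFinite A
  induction A, hA using Set.Finite.induction_on with
  | empty =>
    intro _
    rw [hγ.1]
    exact ⟨by simp, fun c _ => nle_zero c⟩
  | @insert a X ha _ ih =>
    intro hl
    have hX := lb_subset hl (Set.subset_insert a X)
    have ih := ih hX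
    have hj := hγ.2.2 {a} X (lb_single (hl.1 a (Or.inl rfl))) hX hl
    refine ⟨?_, ?_⟩
    · rintro _ ⟨x, rfl | hx, rfl⟩
      · exact hj.1
      · exact nle_trans (ih.1 _ ⟨x, hx, rfl⟩) hj.2.1
    · intro c hc
      exact hj.2.2 c (hc _ ⟨a, Or.inl rfl, rfl⟩)
        (ih.2 _ (by rintro _ ⟨x, hx, rfl⟩; exact hc _ ⟨x, Or.inr hx, rfl⟩))

theorem idem_drr {e : S} (he : idem e) : e⁻¹ * e = e ∧ e * e⁻¹ = e := by
  rw [idem_inv he]; exact ⟨he, he⟩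

theorem single_mul_ne {e f : S} (he : idem e) (hf : idem f) (h : e ≠ f) :
    restrictedSetMul ({e} : Set S) {f} = ∅ := by
  ext z
  simp only [Set.mem_empty_iff_false, iff_false]
  rintro ⟨x, rfl, y, rfl, h', -⟩
  rw [(idem_drr he).1, (idem_drr hf).2] at h'
  exact h h'

theorem single_mul_self {e : S} (he : idem e) :
    restrictedSetMul ({e} : Set S) {e} = {e} := by
  ext z
  constructor
  · rintro ⟨x, rfl, y, rfl, h', rfl⟩
    exact he
  · rintro rfl
    exact ⟨z, rfl, z, rfl, by rw [(idem_drr he).1, (idem_drr he).2], he.symm⟩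

theorem single_mul_beta {e f : S} (he : idem e) (hf : idem f) (h : ¬ nle e f) :
    restrictedSetMul ({e} : Set S) (betaMap f) = ∅ := by
  ext z
  simp only [Set.mem_empty_iff_false, iff_false]
  rintro ⟨x, rfl, y, hy, h', -⟩
  rw [(idem_drr he).1, (idem_drr (nle_idem hf hy.2)).2] at h'
  rw [h'] at h
  exact h hy.2

theorem beta_mul_single {x : S} (hx : x ≠ 0) :
    restrictedSetMul (betaMap x) {x⁻¹ * x} = {x} := by
  ext z
  constructor
  · rintro ⟨y, hy, _, rfl, h', rfl⟩
    rw [(idem_drr (idem_d x)).2] at h'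
    rw [← h', aia]
    have := nle_r hy.2
    rw [h', aia] at this
    exact this
  · rintro rfl
    exact ⟨z, ⟨hx, nle_refl z⟩, _, rfl, by rw [(idem_drr (idem_d z)).2], (aia z).symm⟩

theorem d_ne {x : S} (hx : x ≠ 0) : x⁻¹ * x ≠ 0 := by
  intro h; apply hx; rw [← aia x, h, mz]

theorem single_eq [Finite S] {α : S → T} {p : S → T} (hp : ∀ e, idem e → isPhi α e (p e))
    {γ : Set S → T} (hγ : isKGMorphism γ) (hβ : ∀ a, γ (betaMap a) = α a)
    {e : S} (he : idem e) (h0 : e ≠ 0) : γ {e} = p e := by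
  have hid : ∀ f : S, idem f → f ≠ 0 → idem (γ {f}) := by
    intro f hf h
    unfold idem
    rw [← hγ.2.1 _ _ (lb_single h) (lb_single h), single_mul_self hf]
  have hl := morph_lub hγ _ (beta_lb e)
  rw [hβ] at hl
  have hle : ∀ f : S, f ≠ 0 → nle (γ {f}) (α f) := by
    intro f hf
    have := (morph_lub hγ _ (beta_lb f)).1 _ ⟨f, ⟨hf, nle_refl f⟩, rfl⟩
    rwa [hβ] at this
  apply nle_antisymm
  · apply (hp e he).2.2.2.1 _ (hid e he h0) (hle e h0)
    intro f hf hfe hne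
    rw [← hβ, ← hγ.2.1 _ _ (lb_single h0) (beta_lb f), single_mul_beta he hf, hγ.1]
    exact fun h => hne (nle_antisymm hfe h)
  · have ho : ∀ x ∈ (fun x => γ {x}) '' betaMap e,
      ∀ y ∈ (fun x => γ {x}) '' betaMap e, x ≠ y → orth x y := by
      rintro _ ⟨f, hf, rfl⟩ _ ⟨g, hg, rfl⟩ hne
      have i1 := nle_idem he hf.2
      have i2 := nle_idem he hg.2
      have : γ {f} * γ {g} = 0 := by
        rw [← hγ.2.1 _ _ (lb_single hf.1) (lb_single hg.1), single_mul_ne i1 i2, hγ.1]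
        intro h; exact hne (by rw [h])
      refine ⟨?_, ?_⟩
      · rw [idem_inv (hid f i1 hf.1)]; exact this
      · rw [idem_inv (hid g i2 hg.1)]; exact this
    have hd := (lub_dist (Set.toFinite _) ho hl).1 (p e)
    rw [idem_nle_l (hp e he).1 (hp e he).2.1] at hd
    apply hd.2
    rintro _ ⟨_, ⟨f, hf, rfl⟩, rfl⟩
    have i1 := nle_idem he hf.2
    by_cases h : f = e
    · subst h; exact nle_of_l (hp f he).1 rfl
    · have : p e * γ {f} = 0 := by
        rw [← idem_nle_iff (hid f i1 hf.1) (hle f hf.1), ← ma,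
          (hp e he).2.2.1 f i1 hf.2 h, zm]
      simp only [this]; exact nle_zero _

theorem single_eq' [Finite S] {α : S → T} {p : S → T} (hp : ∀ e, idem e → isPhi α e (p e))
    {γ : Set S → T} (hγ : isKGMorphism γ) (hβ : ∀ a, γ (betaMap a) = α a)
    {x : S} (h0 : x ≠ 0) : γ {x} = α x * p (x⁻¹ * x) := by
  rw [← single_eq hp hγ hβ (idem_d x) (d_ne h0), ← hβ x,
    ← hγ.2.1 _ _ (beta_lb x) (lb_single (d_ne h0)), beta_mul_single h0]

theorem universal [Finite S] (α : S → T) (hm : ∀ a b : S, α (a * b) = α a * α b)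
    (h0 : α 0 = 0) :
    ∃ γ : Set S → T, isKGMorphism γ ∧ (∀ a : S, γ (betaMap a) = α a) ∧
        ∀ γ' : Set S → T, isKGMorphism γ' → (∀ a : S, γ' (betaMap a) = α a) →
          ∀ A : Set S, KGlb A → γ' A = γ A := by
  classical
  have hex : ∀ e, ∃ g, idem e → isPhi α e g := by
    intro e
    by_cases he : idem e
    · obtain ⟨g, hg⟩ := phi_exists hm he
      exact ⟨g, fun _ => hg⟩
    · exact ⟨0, fun h => absurd h he⟩
  choose p hp using hex
  have hex2 : ∀ A : Set S, ∃ t, ∀ j, lubS ((fun x => α x * p (x⁻¹ * x)) '' A) j → t = j := by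
    intro A
    by_cases h : ∃ j, lubS ((fun x => α x * p (x⁻¹ * x)) '' A) j
    · obtain ⟨j, hj⟩ := h
      exact ⟨j, fun k hk => lubS_unique hj hk⟩
    · exact ⟨0, fun j hj => absurd ⟨j, hj⟩ h⟩
  choose γ hγ using hex2
  have ho : ∀ A : Set S, KGlb A → ∀ x ∈ (fun x => α x * p (x⁻¹ * x)) '' A,
      ∀ y ∈ (fun x => α x * p (x⁻¹ * x)) '' A, x ≠ y → orth x y := by
    rintro A hA _ ⟨x, hx, rfl⟩ _ ⟨y, hy, rfl⟩ hne
    have hxy : x ≠ y := fun h => hne (by rw [h])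
    exact phi_orth hm hp (fun h => hxy ((hA.2 x hx y hy).1 h))
      (fun h => hxy ((hA.2 x hx y hy).2 h))
  have hl : ∀ A : Set S, KGlb A → lubS ((fun x => α x * p (x⁻¹ * x)) '' A) (γ A) := by
    intro A hA
    obtain ⟨j, hj, -⟩ := lub_exists _ (Set.toFinite _) (ho A hA)
    rw [hγ A j hj]; exact hj
  refine ⟨γ, ⟨?_, ?_, ?_⟩, fun a => hγ _ _ (phi_lub hm hp h0 a), ?_⟩
  · apply hγ
    exact ⟨by simp, fun c _ => nle_zero c⟩
  · intro A B hA hB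
    apply hγ
    have lA := (lub_dist (Set.toFinite _) (ho A hA) (hl A hA)).2 (γ B)
    have lB := fun c => (lub_dist (Set.toFinite _) (ho B hB) (hl B hB)).1 c
    refine ⟨?_, ?_⟩
    · rintro _ ⟨_, ⟨x, hx, y, hy, h, rfl⟩, rfl⟩
      simp only
      rw [← phi_mul_eq hm hp h]
      exact nle_trans (nle_mul_left _ ((hl B hB).1 _ ⟨y, hy, rfl⟩))
        (nle_mul_right _ ((hl A hA).1 _ ⟨x, hx, rfl⟩))
    · intro c hc
      apply lA.2
      rintro _ ⟨_, ⟨x, hx, rfl⟩, rfl⟩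
      apply (lB _).2
      rintro _ ⟨_, ⟨y, hy, rfl⟩, rfl⟩
      simp only
      by_cases h : x⁻¹ * x = y * y⁻¹
      · rw [phi_mul_eq hm hp h]
        exact hc _ ⟨x * y, ⟨x, hx, y, hy, h, rfl⟩, rfl⟩
      · rw [phi_mul_ne hm hp h]; exact nle_zero c
  · intro A B hA hB hAB
    have h := hl _ hAB
    refine ⟨(hl A hA).2 _ ?_, (hl B hB).2 _ ?_, fun c h1 h2 => h.2 c ?_⟩
    · rintro _ ⟨x, hx, rfl⟩; exact h.1 _ ⟨x, Or.inl hx, rfl⟩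
    · rintro _ ⟨x, hx, rfl⟩; exact h.1 _ ⟨x, Or.inr hx, rfl⟩
    · rintro _ ⟨x, hx | hx, rfl⟩
      · exact nle_trans ((hl A hA).1 _ ⟨x, hx, rfl⟩) h1
      · exact nle_trans ((hl B hB).1 _ ⟨x, hx, rfl⟩) h2
  · intro γ' hγ' hβ A hA
    symm
    apply hγ
    have := morph_lub hγ' A hA
    convert this using 1
    apply Set.image_congr
    intro x hx
    exact (single_eq' hp hγ' hβ (hA.1 x hx)).symm

end Uniq

/-- For a finite inverse semigroup `S` with zero, the Booleanization of `S` is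
`K(𝒢(S))`: the map `β` is an injective zero-preserving homomorphism into the local
bisections of the restricted groupoid of `S`, and it is universal among
zero-preserving homomorphisms from `S` to Boolean inverse semigroups. -/
theorem booleanization_of_finite_inverse_semigroup (S : Type u)
    [Mul S] [Zero S] [Inv S] [IsInverseSemigroup S] [Finite S] :
    (∀ a : S, KGlb (betaMap a)) ∧
    (betaMap (0 : S) = (∅ : Set S)) ∧
    (∀ a b : S, betaMap (a * b) = restrictedSetMul (betaMap a) (betaMap b)) ∧
    (∀ a b : S, betaMap a = betaMap b → a = b) ∧
    (∀ (T : Type v) [Mul T] [Zero T] [Inv T] [IsBooleanInverseSemigroup T]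
        (α : S → T), (∀ a b : S, α (a * b) = α a * α b) → α 0 = 0 →
      ∃ γ : Set S → T, isKGMorphism γ ∧ (∀ a : S, γ (betaMap a) = α a) ∧
        ∀ γ' : Set S → T, isKGMorphism γ' → (∀ a : S, γ' (betaMap a) = α a) →
          ∀ A : Set S, KGlb A → γ' A = γ A) := by
  exact ⟨beta_lb, beta_zero, beta_mul, beta_inj, fun T _ _ _ _ α hm h0 => universal α hm h0⟩

end Paper
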